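/- Strong completeness of ELF: for every formula φ and every set Φ of formulas of the language ELF, if Φ semantically entails φ over similarity models (every pointed similarity model satisfying all formulas of Φ satisfies φ), then Φ ⊢_ELF φ (i.e., there is a finite subset {ψ_1,…,ψ_n} ⊆ Φ such that (ψ_1 ∧ … ∧ ψ_n) → φ is a theorem of ELF). -/

import Mathlib

/-- Formulas of the language ELF over a set `Ag` of agents, with
propositional variables drawn from the countably infinite set `ℕ`.  Groups
are nonempty finite sets of agents. -/
inductive Formula (Ag : Type) : Type
  | atom : ℕ → Formula Ag
  | neg  : Formula Ag → Formula Ag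
  | impl : Formula Ag → Formula Ag → Formula Ag
  | K    : Ag → Formula Ag → Formula Ag
  | F    : (G : Finset Ag) → G.Nonempty → Formula Ag → Formula Ag

/-- A similarity model `(W, A, E, C, ν)`. -/
structure SimModel (Ag : Type) where
  W : Type
  A : Type
  w_nonempty : Nonempty W
  E : W → W → Set A
  Cap : Ag → Set A
  val : W → Set ℕ
  positivity : ∀ s t : W, E s t = Set.univ → s = t
  symmetry : ∀ s t : W, E s t = E t s

/-- Satisfaction on similarity models. -/
def SimModel.sat {Ag : Type} (M : SimModel Ag) : M.W → Formula Ag → Prop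
  | s, .atom p => p ∈ M.val s
  | s, .neg φ => ¬ M.sat s φ
  | s, .impl φ ψ => M.sat s φ → M.sat s ψ
  | s, .K a φ => ∀ t, M.Cap a ⊆ M.E s t → M.sat t φ
  | s, .F G _ φ => ∀ t, (⋂ a ∈ G, M.Cap a) ⊆ M.E s t → M.sat t φ

namespace Formula
/-- Conjunction, defined from the primitive connectives. -/
def and {Ag : Type} (φ ψ : Formula Ag) : Formula Ag := .neg (φ.impl ψ.neg)
/-- A fixed tautology. -/
def top {Ag : Type} : Formula Ag := (atom 0).impl (atom 0)
/-- Biconditional, defined from the primitive connectives. -/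
def iff {Ag : Type} (φ ψ : Formula Ag) : Formula Ag := (φ.impl ψ).and (ψ.impl φ)
end Formula

/-- `φ` is a propositional tautology: it evaluates to `true` under every
assignment of truth values to formulas that respects negation and implication
(thereby treating atoms and modal formulas as propositional atoms). -/
def IsTautology {Ag : Type} (φ : Formula Ag) : Prop :=
  ∀ v : Formula Ag → Bool,
    (∀ ψ : Formula Ag, v ψ.neg = !v ψ) →
    (∀ ψ χ : Formula Ag, v (ψ.impl χ) = (!v ψ || v χ)) →
    v φ = true

/-- The axiomatic system ELF: the least set of formulas containing all propositional tautologies, closed under modus ponens, necessitation for each `K_a` and the rule NF, and containing the axiom schemes K, B, KF, F1, F2 and BF. -/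
inductive Prov {Ag : Type} : Formula Ag → Prop
  | taut {φ : Formula Ag} : IsTautology φ → Prov φ
  | mp {φ ψ : Formula Ag} : Prov (φ.impl ψ) → Prov φ → Prov ψ
  | nec {φ : Formula Ag} (a : Ag) : Prov φ → Prov (.K a φ)
  | kK {φ ψ : Formula Ag} (a : Ag) :
      Prov ((Formula.K a (φ.impl ψ)).impl ((Formula.K a φ).impl (.K a ψ)))
  | axB {φ : Formula Ag} (a : Ag) :
      Prov (φ.impl (.K a (Formula.neg (.K a φ.neg))))
  | kF {φ ψ : Formula Ag} (G : Finset Ag) (hG : G.Nonempty) :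
      Prov ((Formula.F G hG (φ.impl ψ)).impl ((Formula.F G hG φ).impl (.F G hG ψ)))
  | f1 {φ : Formula Ag} (a : Ag) :
      Prov ((Formula.F {a} (Finset.singleton_nonempty a) φ).iff (.K a φ))
  | f2 {φ : Formula Ag} (G H : Finset Ag) (hG : G.Nonempty) (hH : H.Nonempty)
      (hHG : H ⊆ G) : Prov ((Formula.F G hG φ).impl (.F H hH φ))
  | bf {φ : Formula Ag} (G : Finset Ag) (hG : G.Nonempty) :
      Prov (φ.impl (.F G hG (Formula.neg (.F G hG φ.neg))))
  | nf {φ : Formula Ag} (G : Finset Ag) (hG : G.Nonempty) :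
      Prov φ → Prov (.F G hG φ)

inductive Der {Ag : Type} (Γ : Set (Formula Ag)) : Formula Ag → Prop
  | ax {φ : Formula Ag} : φ ∈ Γ → Der Γ φ
  | thm {φ : Formula Ag} : Prov φ → Der Γ φ
  | mp {φ ψ : Formula Ag} : Der Γ (φ.impl ψ) → Der Γ φ → Der Γ ψ

theorem val_conj {Ag : Type} (v : Formula Ag → Bool)
    (hn : ∀ ψ : Formula Ag, v ψ.neg = !v ψ)
    (hi : ∀ ψ χ : Formula Ag, v (ψ.impl χ) = (!v ψ || v χ)) (L : List (Formula Ag)) :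
    v (L.foldr Formula.and Formula.top) = L.all v := by
  induction L with
  | nil => simp [Formula.top, hi]
  | cons a L ih => simp [Formula.and, hi, hn, ih]

theorem Der.toList {Ag : Type} {Γ : Set (Formula Ag)} {φ : Formula Ag} (h : Der Γ φ) :
    ∃ L : List (Formula Ag), (∀ ψ ∈ L, ψ ∈ Γ) ∧
      Prov ((L.foldr Formula.and Formula.top).impl φ) := by
  induction h with
  | @ax φ h =>
    refine ⟨[φ], by simpa using h, Prov.taut fun v hn hi => ?_⟩
    rw [hi, val_conj v hn hi]
    cases hv : v φ <;> simp [hv]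
  | @thm φ h =>
    refine ⟨[], by simp, Prov.mp (Prov.taut fun v hn hi => ?_) h⟩
    rw [hi, hi]
    cases hv : v φ <;> simp
  | @mp φ ψ _ _ ih1 ih2 =>
    obtain ⟨L1, h1, p1⟩ := ih1
    obtain ⟨L2, h2, p2⟩ := ih2
    refine ⟨L1 ++ L2, ?_, Prov.mp (Prov.mp (Prov.taut fun v hn hi => ?_) p1) p2⟩
    · intro χ hχ
      rcases List.mem_append.1 hχ with h | h
      exacts [h1 _ h, h2 _ h]
    · simp only [hi, val_conj v hn hi, List.all_append]
      cases L1.all v <;> cases L2.all v <;> cases v φ <;> cases v ψ <;> rfl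

theorem Der.ded {Ag : Type} {Γ : Set (Formula Ag)} {ψ χ : Formula Ag}
    (h : Der (insert ψ Γ) χ) : Der Γ (ψ.impl χ) := by
  induction h with
  | @ax φ h =>
    rcases h with rfl | h
    · refine .thm (.taut fun v hn hi => ?_)
      rw [hi]; cases v φ <;> rfl
    · refine .mp (.thm (.taut fun v hn hi => ?_)) (.ax h)
      rw [hi, hi]; cases v φ <;> cases v ψ <;> rfl
  | @thm φ h =>
    refine .mp (.thm (.taut fun v hn hi => ?_)) (.thm h)
    rw [hi, hi]; cases v φ <;> cases v ψ <;> rfl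
  | @mp φ θ _ _ ih1 ih2 =>
    refine .mp (.mp (.thm (.taut fun v hn hi => ?_)) ih1) ih2
    simp only [hi]; cases v φ <;> cases v ψ <;> cases v θ <;> rfl

theorem Der.mono {Ag : Type} {Γ Δ : Set (Formula Ag)} (hs : Γ ⊆ Δ) {χ : Formula Ag}
    (h : Der Γ χ) : Der Δ χ := by
  induction h with
  | ax h => exact .ax (hs h)
  | thm h => exact .thm h
  | mp _ _ h1 h2 => exact .mp h1 h2

theorem Der.chain {Ag : Type} {c : Set (Set (Formula Ag))} (hc : IsChain (· ⊆ ·) c)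
    (hne : c.Nonempty) {χ : Formula Ag} (h : Der (⋃₀ c) χ) : ∃ Γ ∈ c, Der Γ χ := by
  induction h with
  | ax h => obtain ⟨Γ, h1, h2⟩ := h; exact ⟨Γ, h1, .ax h2⟩
  | thm h => obtain ⟨Γ, h1⟩ := hne; exact ⟨Γ, h1, .thm h⟩
  | mp _ _ h1 h2 =>
    obtain ⟨Γ, a1, d1⟩ := h1
    obtain ⟨Δ, a2, d2⟩ := h2
    rcases hc.total a1 a2 with h | h
    · exact ⟨Δ, a2, .mp (d1.mono h) d2⟩
    · exact ⟨Γ, a1, .mp d1 (d2.mono h)⟩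

structure IsWorld {Ag : Type} (Γ : Set (Formula Ag)) : Prop where
  prov : ∀ φ, Prov φ → φ ∈ Γ
  mp : ∀ φ ψ, φ.impl ψ ∈ Γ → φ ∈ Γ → ψ ∈ Γ
  neg : ∀ φ, φ.neg ∈ Γ ↔ φ ∉ Γ

theorem lindenbaum {Ag : Type} {Γ : Set (Formula Ag)} {φ : Formula Ag} (h : ¬ Der Γ φ) :
    ∃ Δ, Γ ⊆ Δ ∧ IsWorld Δ ∧ φ ∉ Δ := by
  obtain ⟨Δ, hΓ, hmax⟩ := zorn_subset_nonempty {Δ : Set (Formula Ag) | ¬ Der Δ φ}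
    (fun c hc hch hne => ⟨⋃₀ c, fun hd => by
      obtain ⟨Δ, h1, h2⟩ := hd.chain hch hne
      exact hc h1 h2, fun s hs => Set.subset_sUnion_of_mem hs⟩) Γ h
  have hnd : ¬ Der Δ φ := hmax.prop
  have key : ∀ ψ, ψ ∉ Δ → Der Δ (ψ.impl φ) := fun ψ hψ => by
    by_contra hcon
    have h1 : ¬ Der (insert ψ Δ) φ := fun hd => hcon hd.ded
    exact hψ (hmax.le_of_ge h1 (Set.subset_insert _ _) (Set.mem_insert _ _))
  have closed : ∀ ψ, Der Δ ψ → ψ ∈ Δ := fun ψ hd => by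
    by_contra hψ
    exact hnd (.mp (key ψ hψ) hd)
  refine ⟨Δ, hΓ, ⟨fun ψ hp => closed _ (.thm hp),
    fun a b h1 h2 => closed _ (.mp (.ax h1) (.ax h2)), fun ψ => ⟨fun h1 h2 => ?_, fun h1 => ?_⟩⟩,
    fun hφ => hnd (.ax hφ)⟩
  · refine hnd (.mp (.mp (.thm (.taut fun v hn hi => ?_)) (.ax h1)) (.ax h2))
    simp only [hi, hn]; cases v ψ <;> rfl
  · by_contra h2
    refine hnd (.mp (.mp (.thm (.taut fun v hn hi => ?_)) (key _ h1)) (key _ h2))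
    simp only [hi, hn]; cases v ψ <;> cases v φ <;> rfl

def CanR {Ag : Type} (G : Finset Ag) (hG : G.Nonempty) (s t : Set (Formula Ag)) : Prop :=
  ∀ ψ, Formula.F G hG ψ ∈ s → ψ ∈ t

theorem CanR.symm {Ag : Type} {G : Finset Ag} {hG : G.Nonempty} {s t : Set (Formula Ag)}
    (hs : IsWorld s) (ht : IsWorld t) (h : CanR G hG s t) : CanR G hG t s := by
  intro ψ hψ
  by_contra hn
  have h1 := h _ (hs.mp _ _ (hs.prov _ (.bf G hG)) ((hs.neg ψ).2 hn))
  refine (ht.neg _).1 h1 (ht.mp _ _ (ht.mp _ _ (ht.prov _ (.kF G hG))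
    (ht.prov _ (.nf G hG (.taut fun v hn hi => ?_)))) hψ)
  simp only [hi, hn]; cases v ψ <;> rfl

theorem CanR.mono {Ag : Type} {G H : Finset Ag} {hG : G.Nonempty} {hH : H.Nonempty}
    {s t : Set (Formula Ag)} (hs : IsWorld s) (hHG : H ⊆ G) (h : CanR H hH s t) :
    CanR G hG s t :=
  fun ψ hψ => h ψ (hs.mp _ _ (hs.prov _ (.f2 G H hG hH hHG)) hψ)

theorem exist_succ {Ag : Type} {G : Finset Ag} {hG : G.Nonempty} {s : Set (Formula Ag)}
    (hs : IsWorld s) {χ : Formula Ag} (h : Formula.F G hG χ ∉ s) :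
    ∃ t, IsWorld t ∧ CanR G hG s t ∧ χ ∉ t := by
  have hd : ¬ Der {ψ | Formula.F G hG ψ ∈ s} χ := by
    intro hd
    apply h
    clear h
    induction hd with
    | ax h => exact h
    | thm h => exact hs.prov _ (.nf G hG h)
    | mp _ _ h1 h2 => exact hs.mp _ _ (hs.mp _ _ (hs.prov _ (.kF G hG)) h1) h2
  obtain ⟨t, h1, h2, h3⟩ := lindenbaum hd
  exact ⟨t, h2, fun ψ hψ => h1 hψ, h3⟩

theorem mem_K_iff {Ag : Type} {s : Set (Formula Ag)} (hs : IsWorld s) (a : Ag)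
    (χ : Formula Ag) :
    Formula.K a χ ∈ s ↔ Formula.F {a} (Finset.singleton_nonempty a) χ ∈ s := by
  have h := hs.prov _ (Prov.f1 (φ := χ) a)
  constructor
  · refine hs.mp _ _ (hs.mp _ _ (hs.prov _ (.taut fun v hn hi => ?_)) h)
    simp only [Formula.iff, Formula.and, hi, hn]
    cases v (.K a χ) <;> cases v (.F {a} (Finset.singleton_nonempty a) χ) <;> rfl
  · refine hs.mp _ _ (hs.mp _ _ (hs.prov _ (.taut fun v hn hi => ?_)) h)
    simp only [Formula.iff, Formula.and, hi, hn]
    cases v (.K a χ) <;> cases v (.F {a} (Finset.singleton_nonempty a) χ) <;> rfl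

def canModel (Ag : Type) (hne : ∃ s : Set (Formula Ag), IsWorld s) : SimModel Ag where
  W := {s : Set (Formula Ag) // IsWorld s}
  A := Finset Ag
  w_nonempty := ⟨⟨hne.choose, hne.choose_spec⟩⟩
  E s t := {H | ∃ hH : H.Nonempty, CanR H hH s.1 t.1}
  Cap a := {H | a ∈ H}
  val s := {p | Formula.atom p ∈ s.1}
  positivity s t h := by
    have : (∅ : Finset Ag) ∈ {H : Finset Ag | ∃ hH : H.Nonempty, CanR H hH s.1 t.1} := by
      rw [h]; trivial
    obtain ⟨h, _⟩ := this
    exact absurd h (by simp)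
  symmetry s t := by
    ext H
    exact ⟨fun ⟨h, r⟩ => ⟨h, r.symm s.2 t.2⟩, fun ⟨h, r⟩ => ⟨h, r.symm t.2 s.2⟩⟩

theorem rel_iff {Ag : Type} {s t : Set (Formula Ag)} (hs : IsWorld s) (G : Finset Ag)
    (hG : G.Nonempty) :
    (⋂ a ∈ G, {H : Finset Ag | a ∈ H}) ⊆ {H | ∃ hH : H.Nonempty, CanR H hH s t} ↔
      CanR G hG s t := by
  constructor
  · intro h
    obtain ⟨_, r⟩ := h (show G ∈ _ by simp)
    exact r
  · intro r H hH
    have hGH : G ⊆ H := by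
      intro a ha
      simp only [Set.mem_iInter, Set.mem_setOf_eq] at hH
      exact hH a ha
    exact ⟨hG.mono hGH, r.mono hs hGH⟩

theorem truth_F {Ag : Type} {s : Set (Formula Ag)} (hs : IsWorld s) (G : Finset Ag)
    (hG : G.Nonempty) (χ : Formula Ag) :
    (∀ t : {s : Set (Formula Ag) // IsWorld s}, (⋂ a ∈ G, {H : Finset Ag | a ∈ H}) ⊆
      {H | ∃ hH : H.Nonempty, CanR H hH s t.1} → χ ∈ t.1) ↔ Formula.F G hG χ ∈ s := by
  constructor
  · intro h
    by_contra hn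
    obtain ⟨t, ht, r, hχ⟩ := exist_succ hs hn
    exact hχ (h ⟨t, ht⟩ ((rel_iff hs G hG).2 r))
  · intro h t hr
    exact (rel_iff hs G hG).1 hr _ h

theorem truth {Ag : Type} (hne : ∃ s : Set (Formula Ag), IsWorld s) (χ : Formula Ag) :
    ∀ s : {s : Set (Formula Ag) // IsWorld s}, (canModel Ag hne).sat s χ ↔ χ ∈ s.1 := by
  induction χ with
  | atom p => intro s; exact Iff.rfl
  | neg χ ih => intro s; exact (not_congr (ih s)).trans (s.2.neg χ).symm
  | impl χ ψ ih1 ih2 =>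
    intro s
    refine (imp_congr (ih1 s) (ih2 s)).trans ⟨fun h => ?_, fun h => s.2.mp _ _ h⟩
    by_cases hχ : χ ∈ s.1
    · refine s.2.mp _ _ (s.2.prov _ (.taut fun v hn hi => ?_)) (h hχ)
      simp only [hi]; cases v χ <;> cases v ψ <;> rfl
    · refine s.2.mp _ _ (s.2.prov _ (.taut fun v hn hi => ?_)) ((s.2.neg _).2 hχ)
      simp only [hi, hn]; cases v χ <;> cases v ψ <;> rfl
  | K a χ ih =>
    intro s
    rw [mem_K_iff s.2, ← truth_F s.2]
    refine forall_congr' fun t => imp_congr ?_ (ih t)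
    simp only [Finset.mem_singleton, Set.iInter_iInter_eq_left]
    exact Iff.rfl
  | F G hG χ ih =>
    intro s
    rw [← truth_F s.2]
    exact forall_congr' fun t => imp_congr Iff.rfl (ih t)

/-- strong completeness of ELF: if `Φ` semantically entails
`φ` over similarity models, then some finite conjunction `ψ₁ ∧ … ∧ ψₙ` of
members of `Φ` is such that `(ψ₁ ∧ … ∧ ψₙ) → φ` is a theorem of ELF. -/
theorem stmt_17 {Ag : Type} [Fintype Ag] [Nonempty Ag]
    (Φ : Set (Formula Ag)) (φ : Formula Ag)
    (h : ∀ (M : SimModel Ag) (s : M.W), (∀ ψ ∈ Φ, M.sat s ψ) → M.sat s φ) :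
    ∃ L : List (Formula Ag), (∀ ψ ∈ L, ψ ∈ Φ) ∧
      Prov ((L.foldr Formula.and Formula.top).impl φ) := by
  apply Der.toList
  by_contra hd
  obtain ⟨Δ, h1, h2, h3⟩ := lindenbaum hd
  have hne : ∃ s : Set (Formula Ag), IsWorld s := ⟨Δ, h2⟩
  exact h3 ((truth hne φ ⟨Δ, h2⟩).1
    (h (canModel Ag hne) ⟨Δ, h2⟩ fun ψ hψ => (truth hne ψ ⟨Δ, h2⟩).2 (h1 hψ)))
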